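/- Under the stated assumptions on the family Q(t,·), the function E_res : ℝ^{2×2}_sym → ℝ is a quadratic form (i.e., there is a symmetric bilinear form b on ℝ^{2×2}_sym with E_res(U) = b(U,U) for all U), and it satisfies (1/(64·C_W))|U|² ≤ E_res(U) ≤ (C_W/64)|U|² for all U ∈ ℝ^{2×2}_sym. -/

import Mathlib

/-!
Call `f : V → ℝ` a nonnegative quadratic functional if `f ≥ 0`, `f (c • v) = c² f v`, and `f`
satisfies the parallelogram identity. Such a functional is a quadratic form: its polarization is
biadditive by the classical Jordan–von Neumann computation, and real-homogeneous because an additive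
function `ℝ → ℝ` that is bounded near `0` is linear (`IsNonnegQuad.exists_bilin`).

The point of this description is that it passes to linear substitutions, to integrals, and to partial
infima (`IsNonnegQuad.iInf`). For the last of these, the parallelogram identity for `f` gives one
inequality for the infimum, and applying that inequality to `(u + v, u - v)` gives the other; no
minimizer is needed. Hence `Q₂(t, ·)` and then `E_res` are quadratic forms.

For the bounds, `Q₂(t, B)` lies between `|B|² / C_W` (every completion of `B` by a third column
contains the block `B`) and `C_W |B|²` (take `d = 0`). Entrywise, with `χ = 𝟙(t > 0)`,
`∫ (t a + m + χ u/2)² dt = (a + 3u/4)²/12 + (m + u/4)² + u²/64`,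
which is minimal, with value `u²/64`, at `a = -3u/4`, `m = -u/4`.

Since the infimum in `Q₂` runs over an uncountable set, its measurability in `t` is obtained by
restricting `d` to a countable dense set, which is possible as `Q(t, ·)` is continuous.
-/

open MeasureTheory Matrix Filter Topology

noncomputable section

/-- 2×2 real matrices. -/
abbrev M2 : Type := Matrix (Fin 2) (Fin 2) ℝ
/-- 3×3 real matrices. -/
abbrev M3 : Type := Matrix (Fin 3) (Fin 3) ℝ

/-- squared Frobenius norm of a 2×2 matrix -/
def frobSq2 (A : M2) : ℝ := ∑ i, ∑ j, (A i j) ^ 2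

/-- squared Frobenius norm of a 3×3 matrix -/
def frobSq3 (A : M3) : ℝ := ∑ i, ∑ j, (A i j) ^ 2

/-- symmetric part of a matrix: `sym G = (G + Gᵀ)/2` -/
def symPart (G : M3) : M3 := (1 / 2 : ℝ) • (G + Gᵀ)

/-- `ι A` : the 3×3 matrix with upper-left 2×2 block `A` and zeros elsewhere -/
def iota (A : M2) : M3 :=
  Matrix.of fun i j =>
    if hi : (i : ℕ) < 2 then (if hj : (j : ℕ) < 2 then A ⟨i, hi⟩ ⟨j, hj⟩ else 0) else 0

/-- `d ⊗ e₃` : the 3×3 matrix whose third column is `d` and whose other entries vanish -/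
def tensorE3 (d : Fin 3 → ℝ) : M3 :=
  Matrix.of fun i j => if j = (2 : Fin 3) then d i else 0

/-- the symmetric 2×2 real matrices, as a submodule of `M2` -/
def Sym2M : Submodule ℝ M2 where
  carrier := {A : M2 | A.IsSymm}
  add_mem' := fun ha hb => Matrix.IsSymm.add ha hb
  zero_mem' := Matrix.isSymm_zero
  smul_mem' := fun c _ ha => Matrix.IsSymm.smul ha c

/-- the reduced quadratic form `Q₂(t,B) = inf_{d∈ℝ³} Q(t, ι(B) + sym(d⊗e₃))` -/
def Q2fam (Q : ℝ → M3 → ℝ) (t : ℝ) (B : M2) : ℝ :=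
  ⨅ d : Fin 3 → ℝ, Q t (iota B + symPart (tensorE3 d))

/-- the effective bending stiffness
`Q_el(A) = inf_{M symmetric} ∫_{−1/2}^{1/2} Q₂(t, t·A + M) dt` -/
def Qel (Q : ℝ → M3 → ℝ) (A : M2) : ℝ :=
  ⨅ M : {M : M2 // M.IsSymm},
    ∫ t in Set.Ioo (-(1 : ℝ) / 2) (1 / 2), Q2fam Q t (t • A + M.val)

/-- the residual energy
`E_res(U) = inf_{A,M symmetric} ∫_{−1/2}^{1/2} Q₂(t, t·A + M + 𝟙(t>0)·(1/2)U) dt` -/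
def Eres (Q : ℝ → M3 → ℝ) (U : M2) : ℝ :=
  ⨅ p : {M : M2 // M.IsSymm} × {M : M2 // M.IsSymm},
    ∫ t in Set.Ioo (-(1 : ℝ) / 2) (1 / 2),
      Q2fam Q t (t • p.1.val + p.2.val + (if 0 < t then (1 : ℝ) else 0) • ((1 / 2 : ℝ) • U))

/-! ### Nonnegative quadratic functionals -/

section Quad

variable {V W : Type*} [AddCommGroup V] [Module ℝ V] [AddCommGroup W] [Module ℝ W]

/-- A nonnegative, `2`-homogeneous function satisfying the parallelogram identity. This is the same
as a positive semidefinite quadratic form, expressed without reference to a bilinear form. -/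
structure IsNonnegQuad (f : V → ℝ) : Prop where
  nonneg : ∀ v, 0 ≤ f v
  smul : ∀ (c : ℝ) v, f (c • v) = c ^ 2 * f v
  para : ∀ u v, f (u + v) + f (u - v) = 2 * f u + 2 * f v

theorem IsNonnegQuad.comp {f : W → ℝ} (hf : IsNonnegQuad f) (L : V →ₗ[ℝ] W) :
    IsNonnegQuad fun v => f (L v) where
  nonneg v := hf.nonneg _
  smul c v := by simp [hf.smul]
  para u v := by simp [hf.para]

theorem IsNonnegQuad.bddBelow {f : V → ℝ} (hf : IsNonnegQuad f) {ι : Sort*} (g : ι → V) :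
    BddBelow (Set.range fun i => f (g i)) :=
  ⟨0, by rintro _ ⟨i, rfl⟩; exact hf.nonneg _⟩

theorem IsNonnegQuad.iInf {f : V × W → ℝ} (hf : IsNonnegQuad f) :
    IsNonnegQuad fun v => ⨅ w, f (v, w) := by
  have bdd : ∀ v, BddBelow (Set.range fun w => f (v, w)) := fun v => hf.bddBelow _
  have nonneg : ∀ v, 0 ≤ ⨅ w, f (v, w) := fun v => le_ciInf fun w => hf.nonneg _
  have smul_le : ∀ (c : ℝ) v, ⨅ w, f (c • v, w) ≤ c ^ 2 * ⨅ w, f (v, w) := by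
    intro c v
    rw [Real.mul_iInf_of_nonneg (sq_nonneg c)]
    refine le_ciInf fun w => (ciInf_le (bdd _) (c • w)).trans ?_
    rw [← hf.smul]; rfl
  have smul : ∀ (c : ℝ) v, ⨅ w, f (c • v, w) = c ^ 2 * ⨅ w, f (v, w) := by
    intro c v
    refine le_antisymm (smul_le c v) ?_
    rcases eq_or_ne c 0 with rfl | hc
    · simpa using nonneg _
    · have h := smul_le c⁻¹ (c • v)
      rw [inv_smul_smul₀ hc] at h
      calc _ ≤ c ^ 2 * ((c⁻¹) ^ 2 * ⨅ w, f (c • v, w)) := by gcongr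
        _ = _ := by field_simp
  have para_le : ∀ u v, (⨅ w, f (u + v, w)) + (⨅ w, f (u - v, w)) ≤
      2 * (⨅ w, f (u, w)) + 2 * ⨅ w, f (v, w) := by
    intro u v
    have key : ∀ w₁ w₂, (⨅ w, f (u + v, w)) + (⨅ w, f (u - v, w)) ≤
        2 * f (u, w₁) + 2 * f (v, w₂) := fun w₁ w₂ => by
      rw [← hf.para]
      exact add_le_add (ciInf_le (bdd _) (w₁ + w₂)) (ciInf_le (bdd _) (w₁ - w₂))
    have h1 : ∀ w₁, ((⨅ w, f (u + v, w)) + (⨅ w, f (u - v, w)) - 2 * f (u, w₁)) / 2 ≤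
        ⨅ w, f (v, w) := fun w₁ => le_ciInf fun w₂ => by linarith [key w₁ w₂]
    have h2 : ((⨅ w, f (u + v, w)) + (⨅ w, f (u - v, w)) - 2 * ⨅ w, f (v, w)) / 2 ≤
        ⨅ w, f (u, w) := le_ciInf fun w₁ => by linarith [h1 w₁]
    linarith
  refine ⟨nonneg, smul, fun u v => le_antisymm (para_le u v) ?_⟩
  have h := para_le (u + v) (u - v)
  rw [show u + v + (u - v) = (2 : ℝ) • u by module,
    show u + v - (u - v) = (2 : ℝ) • v by module, smul, smul] at h
  linarith

theorem IsNonnegQuad.integral {α : Type*} [MeasurableSpace α] {μ : Measure α} {f : α → V → ℝ}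
    (hf : ∀ᵐ t ∂μ, IsNonnegQuad (f t)) (hint : ∀ v, Integrable (fun t => f t v) μ) :
    IsNonnegQuad fun v => ∫ t, f t v ∂μ where
  nonneg v := integral_nonneg_of_ae (hf.mono fun t ht => ht.nonneg v)
  smul c v := by
    rw [← integral_const_mul]
    exact integral_congr_ae (hf.mono fun t ht => ht.smul c v)
  para u v := by
    rw [← integral_add (hint _) (hint _), ← integral_const_mul, ← integral_const_mul,
      ← integral_add ((hint _).const_mul _) ((hint _).const_mul _)]
    exact integral_congr_ae (hf.mono fun t ht => ht.para u v)

/-- A nonnegative quadratic functional is given by a symmetric bilinear form. -/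
theorem IsNonnegQuad.exists_bilin {f : V → ℝ} (hf : IsNonnegQuad f) :
    ∃ b : V →ₗ[ℝ] V →ₗ[ℝ] ℝ, (∀ u v, b u v = b v u) ∧ ∀ u, f u = b u u := by
  have f0 : f 0 = 0 := by simpa using hf.smul 0 0
  have fneg : ∀ v, f (-v) = f v := fun v => by simpa using hf.smul (-1) v
  let B : V → V → ℝ := fun u v => (f (u + v) - f (u - v)) / 4
  have symm : ∀ u v, B u v = B v u := fun u v => by
    simp only [B]; rw [add_comm u v, ← fneg (u - v), neg_sub]
  have zero : ∀ v, B 0 v = 0 := fun v => by simp [B, fneg]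
  -- The parallelogram identity at `(x ± v, y)` says that `B (·) v` is midpoint-affine.
  have mid : ∀ x y v, B (x + y) v + B (x - y) v = 2 * B x v := fun x y v => by
    have h1 := hf.para (x + v) y
    have h2 := hf.para (x - v) y
    simp only [B]
    rw [show x + y + v = x + v + y by abel, show x + y - v = x - v + y by abel,
      show x - y + v = x + v - y by abel, show x - y - v = x - v - y by abel]
    linarith
  have add : ∀ p q v, B (p + q) v = B p v + B q v := fun p q v => by
    have h1 := mid ((1 / 2 : ℝ) • (p + q)) ((1 / 2 : ℝ) • (p - q)) v
    have h2 := mid ((1 / 2 : ℝ) • (p + q)) ((1 / 2 : ℝ) • (p + q)) v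
    rw [show (1 / 2 : ℝ) • (p + q) + (1 / 2 : ℝ) • (p - q) = p by module,
      show (1 / 2 : ℝ) • (p + q) - (1 / 2 : ℝ) • (p - q) = q by module] at h1
    rw [show (1 / 2 : ℝ) • (p + q) + (1 / 2 : ℝ) • (p + q) = p + q by module, sub_self, zero] at h2
    linarith
  have smul : ∀ (c : ℝ) u v, B (c • u) v = c * B u v := fun c u v => by
    let φ : ℝ →+ ℝ := AddMonoidHom.mk' (fun t => B (t • u) v) fun s t => by
      simp only [add_smul, add]
    have hφ : Continuous φ := by
      refine φ.continuous_of_isBounded_nhds_zero (Icc_mem_nhds (a := -1) (b := 1) (by simp) (by simp)) ?_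
      refine (Metric.isBounded_Icc (-(2 * f u + 2 * f v)) (2 * f u + 2 * f v)).subset ?_
      rintro _ ⟨t, ht, rfl⟩
      have hp := hf.para (t • u) v
      rw [hf.smul] at hp
      have ht2 : t ^ 2 ≤ 1 := by nlinarith [ht.1, ht.2]
      have h1 := hf.nonneg (t • u + v)
      have h2 := hf.nonneg (t • u - v)
      have h3 := mul_le_mul_of_nonneg_right ht2 (hf.nonneg u)
      have h4 := hf.nonneg u
      have h5 := hf.nonneg v
      change -(2 * f u + 2 * f v) ≤ (f (t • u + v) - f (t • u - v)) / 4 ∧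
        (f (t • u + v) - f (t • u - v)) / 4 ≤ 2 * f u + 2 * f v
      constructor <;> linarith
    have h := map_real_smul φ hφ c 1
    simpa [φ] using h
  refine ⟨LinearMap.mk₂ ℝ B add smul (fun u v w => ?_) (fun c u v => ?_), symm, fun u => ?_⟩
  · rw [symm, add, symm v, symm w]
  · rw [symm, smul, symm v, smul_eq_mul]
  · have h := hf.smul 2 u
    rw [two_smul] at h
    simp only [LinearMap.mk₂_apply, B, sub_self, f0, h]
    ring

end Quad

/-! ### The reduced form on the plane -/

theorem frobSq2_nonneg (A : M2) : 0 ≤ frobSq2 A :=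
  Finset.sum_nonneg fun _ _ => Finset.sum_nonneg fun _ _ => sq_nonneg _

theorem frobSq3_nonneg (A : M3) : 0 ≤ frobSq3 A :=
  Finset.sum_nonneg fun _ _ => Finset.sum_nonneg fun _ _ => sq_nonneg _

/-- `(B, d) ↦ ι(B) + sym(d ⊗ e₃)` as a linear map. -/
def completion : M2 × (Fin 3 → ℝ) →ₗ[ℝ] M3 where
  toFun p := iota p.1 + symPart (tensorE3 p.2)
  map_add' p q := by
    ext i j
    fin_cases i <;> fin_cases j <;> simp [iota, symPart, tensorE3] <;> ring
  map_smul' c p := by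
    ext i j
    fin_cases i <;> fin_cases j <;> simp [iota, symPart, tensorE3] <;> ring

theorem frobSq2_le_frobSq3 {B : M2} (hB : B.IsSymm) (d : Fin 3 → ℝ) :
    frobSq2 B ≤ frobSq3 (symPart (completion (B, d))) := by
  have h : B 1 0 = B 0 1 := hB.apply 0 1
  simp [frobSq2, frobSq3, symPart, completion, iota, tensorE3, Fin.sum_univ_succ, h]
  nlinarith [sq_nonneg (d 0), sq_nonneg (d 1), sq_nonneg (d 2)]

theorem frobSq3_le_frobSq2 (B : M2) : frobSq3 (symPart (completion (B, 0))) ≤ frobSq2 B := by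
  simp [frobSq2, frobSq3, symPart, completion, iota, tensorE3, Fin.sum_univ_succ]
  nlinarith [sq_nonneg (B 0 1 - B 1 0)]

theorem isNonnegQuad_of_bilin {CW : ℝ} (hCW : 0 < CW) {q : M3 → ℝ}
    (hq : ∃ b : M3 →ₗ[ℝ] M3 →ₗ[ℝ] ℝ, (∀ u v, b u v = b v u) ∧ ∀ G, q G = b G G)
    (hb : ∀ G, (1 / CW) * frobSq3 (symPart G) ≤ q G) : IsNonnegQuad q := by
  obtain ⟨b, -, hb'⟩ := hq
  refine ⟨fun G => le_trans (mul_nonneg (by positivity) (frobSq3_nonneg _)) (hb G), fun c v => ?_,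
    fun u v => ?_⟩
  · simp [hb']; ring
  · simp [hb']; ring

/-- The coordinate expansion of a quadratic form in terms of its values, through polarization. -/
theorem quad_expand {q : M3 → ℝ}
    (hq : ∃ b : M3 →ₗ[ℝ] M3 →ₗ[ℝ] ℝ, (∀ u v, b u v = b v u) ∧ ∀ G, q G = b G G) (G : M3) :
    q G = ∑ i, ∑ j, ∑ k, ∑ l, G i j * (G k l *
      ((q (single i j 1 + single k l 1) - q (single i j 1 - single k l 1)) / 4)) := by
  obtain ⟨b, hs, hb⟩ := hq
  have h : ∀ u v, (q (u + v) - q (u - v)) / 4 = b u v := fun u v => by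
    simp [hb, hs v u]; ring
  have e : G = ∑ i, ∑ j, G i j • single i j (1 : ℝ) := by
    conv_lhs => rw [matrix_eq_sum_single G]
    simp [smul_single]
  simp only [h]
  rw [hb]
  conv_lhs => rw [e]
  simp only [map_sum, map_smul, LinearMap.sum_apply, LinearMap.smul_apply, smul_eq_mul,
    Finset.mul_sum]
  exact Finset.sum_congr rfl fun i _ => Finset.sum_congr rfl fun j _ => Finset.sum_congr rfl
    fun k _ => Finset.sum_congr rfl fun l _ => by rw [hs]

theorem measurable_Q2fam {Q : ℝ → M3 → ℝ}
    (hquad : ∀ t, ∃ b : M3 →ₗ[ℝ] M3 →ₗ[ℝ] ℝ, (∀ u v, b u v = b v u) ∧ ∀ G, Q t G = b G G)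
    (hmeas : ∀ G, Measurable fun t => Q t G) {B : ℝ → M2}
    (hB : ∀ i j, Measurable fun t => B t i j) : Measurable fun t => Q2fam Q t (B t) := by
  obtain ⟨S, hSc, hSd⟩ := TopologicalSpace.exists_countable_dense (Fin 3 → ℝ)
  have : Countable S := hSc
  have hcont : ∀ t, Continuous fun d => Q t (completion (B t, d)) := fun t => by
    have hc : ∀ i j, Continuous fun d => completion (B t, d) i j := fun i j => by
      fin_cases i <;> fin_cases j <;> simp [completion, iota, symPart, tensorE3] <;> fun_prop
    have h : (fun d => Q t (completion (B t, d))) = _ :=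
      funext fun d => quad_expand (hquad t) (completion (B t, d))
    rw [h]
    fun_prop
  have hd : ∀ d, Measurable fun t => Q t (completion (B t, d)) := fun d => by
    have hc : ∀ i j, Measurable fun t => completion (B t, d) i j := fun i j => by
      fin_cases i <;> fin_cases j <;> simp [completion, iota, symPart, tensorE3] <;> fun_prop
    have h : (fun t => Q t (completion (B t, d))) = _ :=
      funext fun t => quad_expand (hquad t) (completion (B t, d))
    rw [h]
    fun_prop
  have h : (fun t => Q2fam Q t (B t)) = fun t => ⨅ d : S, Q t (completion (B t, d)) :=
    funext fun t => (hSd.ciInf' (hcont t)).symm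
  rw [h]
  exact Measurable.iInf fun d => hd d

/-- For a single `t`: the reduced form `Q₂` is quadratic and comparable to the Frobenius norm. -/
theorem Q2fam_props {CW : ℝ} (hCW : 0 < CW) {Q : ℝ → M3 → ℝ} {t : ℝ}
    (hq : ∃ b : M3 →ₗ[ℝ] M3 →ₗ[ℝ] ℝ, (∀ u v, b u v = b v u) ∧ ∀ G, Q t G = b G G)
    (hb : ∀ G : M3,
      (1 / CW) * frobSq3 (symPart G) ≤ Q t G ∧ Q t G ≤ CW * frobSq3 (symPart G)) :
    IsNonnegQuad (Q2fam Q t) ∧ (∀ B, Q2fam Q t B ≤ CW * frobSq2 B) ∧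
      ∀ B : M2, B.IsSymm → (1 / CW) * frobSq2 B ≤ Q2fam Q t B := by
  have hQ := (isNonnegQuad_of_bilin hCW hq fun G => (hb G).1).comp completion
  refine ⟨hQ.iInf, fun B => ?_, fun B hB => le_ciInf fun d => ?_⟩
  · refine (ciInf_le (hQ.bddBelow fun d => (B, d)) 0).trans ((hb _).2.trans ?_)
    gcongr
    exact frobSq3_le_frobSq2 B
  · refine le_trans ?_ (hb _).1
    gcongr
    exact frobSq2_le_frobSq3 hB d

/-! ### The strain profile through the thickness -/

/-- The strain `t A + M + 𝟙(t > 0) U/2`, linear in `(U, (A, M))`. -/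
def strain (t : ℝ) : M2 × (Sym2M × Sym2M) →ₗ[ℝ] M2 where
  toFun p := t • (p.2.1 : M2) + p.2.2 + (if 0 < t then (1 : ℝ) else 0) • ((1 / 2 : ℝ) • p.1)
  map_add' p q := by
    simp only [Prod.fst_add, Prod.snd_add, Submodule.coe_add]; module
  map_smul' c p := by
    simp only [Prod.smul_fst, Prod.smul_snd, Submodule.coe_smul, RingHom.id_apply]; module

theorem integrable_profile (a m u : ℝ) :
    IntegrableOn (fun t : ℝ => (t * a + m + (if 0 < t then (1 : ℝ) else 0) * (1 / 2 * u)) ^ 2)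
      (Set.Ioo (-(1 : ℝ) / 2) (1 / 2)) := by
  have h1 : IntegrableOn (fun t : ℝ => (t * a + m) ^ 2) (Set.Ioo (-(1 : ℝ) / 2) (1 / 2)) :=
    (Continuous.integrableOn_Icc (by fun_prop)).mono_set Set.Ioo_subset_Icc_self
  have h2 : IntegrableOn (fun t : ℝ => (t * a + m) * u + u ^ 2 / 4)
      (Set.Ioo (-(1 : ℝ) / 2) (1 / 2)) :=
    (Continuous.integrableOn_Icc (by fun_prop)).mono_set Set.Ioo_subset_Icc_self
  refine (h1.add (h2.indicator (measurableSet_Ioi (a := (0 : ℝ))))).congr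
    (Eventually.of_forall fun t => ?_)
  by_cases ht : 0 < t <;> simp [Set.indicator, ht]
  ring

theorem integral_profile (a m u : ℝ) :
    ∫ t in Set.Ioo (-(1 : ℝ) / 2) (1 / 2),
      (t * a + m + (if 0 < t then (1 : ℝ) else 0) * (1 / 2 * u)) ^ 2 =
      (a + 3 / 4 * u) ^ 2 / 12 + (m + u / 4) ^ 2 + u ^ 2 / 64 := by
  have hpoly : ∀ x y c : ℝ, ∫ t in x..y, (t * a + c) ^ 2 =
      (y ^ 3 - x ^ 3) / 3 * a ^ 2 + (y ^ 2 - x ^ 2) * a * c + (y - x) * c ^ 2 := fun x y c => by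
    rw [intervalIntegral.integral_eq_sub_of_hasDerivAt
      (f := fun t => t ^ 3 / 3 * a ^ 2 + t ^ 2 * a * c + t * c ^ 2)]
    · ring
    · intro t _
      have h := ((((hasDerivAt_pow 3 t).div_const 3).mul_const (a ^ 2)).add
        (((hasDerivAt_pow 2 t).mul_const a).mul_const c)).add ((hasDerivAt_id t).mul_const (c ^ 2))
      exact h.congr_deriv (by norm_num; ring)
    · exact Continuous.intervalIntegrable (by fun_prop) _ _
  have hint := integrable_profile a m u
  rw [← integral_Ioc_eq_integral_Ioo, ← intervalIntegral.integral_of_le (by norm_num)]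
  rw [← integrableOn_Ioc_iff_integrableOn_Ioo] at hint
  rw [← intervalIntegral.integral_add_adjacent_intervals (b := 0)]
  · have hneg : ∫ t in (-(1 : ℝ) / 2)..0,
        (t * a + m + (if 0 < t then (1 : ℝ) else 0) * (1 / 2 * u)) ^ 2 =
        ∫ t in (-(1 : ℝ) / 2)..0, (t * a + m) ^ 2 := by
      refine intervalIntegral.integral_congr_ae (Eventually.of_forall fun t ht => ?_)
      rw [Set.uIoc_of_le (by norm_num)] at ht
      simp [not_lt.mpr ht.2]
    have hpos : ∫ t in (0 : ℝ)..(1 / 2),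
        (t * a + m + (if 0 < t then (1 : ℝ) else 0) * (1 / 2 * u)) ^ 2 =
        ∫ t in (0 : ℝ)..(1 / 2), (t * a + (m + u / 2)) ^ 2 := by
      refine intervalIntegral.integral_congr_ae (Eventually.of_forall fun t ht => ?_)
      rw [Set.uIoc_of_le (by norm_num)] at ht
      simp only [ht.1, if_true]
      ring
    rw [hneg, hpos, hpoly, hpoly]
    ring
  · rw [intervalIntegrable_iff_integrableOn_Ioc_of_le (by norm_num)]
    exact hint.mono_set (Set.Ioc_subset_Ioc le_rfl (by norm_num))
  · rw [intervalIntegrable_iff_integrableOn_Ioc_of_le (by norm_num)]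
    exact hint.mono_set (Set.Ioc_subset_Ioc (by norm_num) le_rfl)

theorem integrable_frobSq2_strain (p : M2 × (Sym2M × Sym2M)) :
    IntegrableOn (fun t => frobSq2 (strain t p)) (Set.Ioo (-(1 : ℝ) / 2) (1 / 2)) :=
  integrable_finsetSum _ fun i _ => integrable_finsetSum _ fun j _ =>
    integrable_profile ((p.2.1 : M2) i j) ((p.2.2 : M2) i j) (p.1 i j)

theorem integral_frobSq2_strain (U : M2) (A M : Sym2M) :
    ∫ t in Set.Ioo (-(1 : ℝ) / 2) (1 / 2), frobSq2 (strain t (U, (A, M))) =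
      frobSq2 ((A : M2) + (3 / 4 : ℝ) • U) / 12 + frobSq2 ((M : M2) + (1 / 4 : ℝ) • U) +
        frobSq2 U / 64 := by
  have h : ∀ i j, ∫ t in Set.Ioo (-(1 : ℝ) / 2) (1 / 2), (strain t (U, (A, M)) i j) ^ 2 = _ :=
    fun i j => integral_profile ((A : M2) i j) ((M : M2) i j) (U i j)
  have hi : ∀ i j, IntegrableOn (fun t => (strain t (U, (A, M)) i j) ^ 2)
      (Set.Ioo (-(1 : ℝ) / 2) (1 / 2)) :=
    fun i j => integrable_profile ((A : M2) i j) ((M : M2) i j) (U i j)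
  unfold frobSq2
  rw [integral_finsetSum _ fun i _ => integrable_finsetSum _ fun j _ => hi i j]
  simp_rw [integral_finsetSum _ fun j _ => hi _ j, h]
  simp [Fin.sum_univ_succ]
  ring

/-- `E_res` is a quadratic form on the symmetric 2×2 matrices and satisfies
`(1/(64·C_W))|U|² ≤ E_res(U) ≤ (C_W/64)|U|²`. -/
theorem statement8 (CW : ℝ) (hCW : 0 < CW) (Q : ℝ → M3 → ℝ)
    (hquad : ∀ t, ∃ b : M3 →ₗ[ℝ] M3 →ₗ[ℝ] ℝ, (∀ u v, b u v = b v u) ∧ ∀ G, Q t G = b G G)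
    (hmeas : ∀ G, Measurable fun t => Q t G)
    (hbound : ∀ t ∈ Set.Ioo (-(1 : ℝ) / 2) (1 / 2), ∀ G : M3,
      (1 / CW) * frobSq3 (symPart G) ≤ Q t G ∧ Q t G ≤ CW * frobSq3 (symPart G)) :
    (∃ b : Sym2M →ₗ[ℝ] Sym2M →ₗ[ℝ] ℝ, (∀ u v, b u v = b v u) ∧
        ∀ U : Sym2M, Eres Q (U : M2) = b U U) ∧
      ∀ U : M2, U.IsSymm →
        (1 / (64 * CW)) * frobSq2 U ≤ Eres Q U ∧ Eres Q U ≤ (CW / 64) * frobSq2 U := by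
  have hI : MeasurableSet (Set.Ioo (-(1 : ℝ) / 2) (1 / 2)) := measurableSet_Ioo
  have hprops := fun t ht => Q2fam_props hCW (hquad t) (hbound t ht)
  have hint : ∀ p, IntegrableOn (fun t => Q2fam Q t (strain t p))
      (Set.Ioo (-(1 : ℝ) / 2) (1 / 2)) := fun p => by
    refine Integrable.mono' ((integrable_frobSq2_strain p).const_mul CW)
      (measurable_Q2fam hquad hmeas fun i j => ?_).aestronglyMeasurable
      (ae_restrict_of_forall_mem hI fun t ht => ?_)
    · have : Measurable fun t : ℝ => if 0 < t then (1 : ℝ) else 0 :=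
        Measurable.ite measurableSet_Ioi measurable_const measurable_const
      simp only [strain, LinearMap.coe_mk, AddHom.coe_mk, Matrix.add_apply, Matrix.smul_apply,
        smul_eq_mul]
      fun_prop
    · rw [Real.norm_of_nonneg ((hprops t ht).1.nonneg _)]
      exact (hprops t ht).2.1 _
  have hF : IsNonnegQuad fun p => ∫ t in Set.Ioo (-(1 : ℝ) / 2) (1 / 2), Q2fam Q t (strain t p) :=
    IsNonnegQuad.integral
      (ae_restrict_of_forall_mem hI fun t ht => (hprops t ht).1.comp (strain t)) hint
  have hE : ∀ U, Eres Q U = ⨅ w : Sym2M × Sym2M,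
      ∫ t in Set.Ioo (-(1 : ℝ) / 2) (1 / 2), Q2fam Q t (strain t (U, w)) := fun U => rfl
  refine ⟨?_, fun U hU => ⟨?_, ?_⟩⟩
  · obtain ⟨b, hs, hb⟩ := (hF.iInf.comp Sym2M.subtype).exists_bilin
    exact ⟨b, hs, hb⟩
  · rw [hE]
    refine le_ciInf fun ⟨A, M⟩ => ?_
    calc (1 / (64 * CW)) * frobSq2 U = (1 / CW) * (frobSq2 U / 64) := by field_simp
      _ ≤ (1 / CW) * ∫ t in Set.Ioo (-(1 : ℝ) / 2) (1 / 2), frobSq2 (strain t (U, (A, M))) := by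
        rw [integral_frobSq2_strain]
        have h1 := frobSq2_nonneg ((A : M2) + (3 / 4 : ℝ) • U)
        have h2 := frobSq2_nonneg ((M : M2) + (1 / 4 : ℝ) • U)
        gcongr
        linarith
      _ ≤ _ := by
        rw [← integral_const_mul]
        refine setIntegral_mono_on ((integrable_frobSq2_strain _).const_mul _) (hint _) hI
          fun t ht => (hprops t ht).2.2 _ ?_
        exact ((A.2.smul t).add M.2).add ((hU.smul _).smul _)
  · -- The competitor completing both squares in `integral_frobSq2_strain`.
    let A : Sym2M := -((3 / 4 : ℝ) • ⟨U, hU⟩)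
    let M : Sym2M := -((1 / 4 : ℝ) • ⟨U, hU⟩)
    rw [hE]
    refine (ciInf_le (hF.bddBelow fun w => (U, w)) (A, M)).trans ?_
    calc _ ≤ ∫ t in Set.Ioo (-(1 : ℝ) / 2) (1 / 2), CW * frobSq2 (strain t (U, (A, M))) :=
        setIntegral_mono_on (hint _) ((integrable_frobSq2_strain _).const_mul _) hI
          fun t ht => (hprops t ht).2.1 _
      _ = (CW / 64) * frobSq2 U := by
        rw [integral_const_mul, integral_frobSq2_strain]
        simp [A, M, frobSq2]
        ring
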